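/- For the unweighted three-dimensional step set S = {(1,0,-1), (-1,0,-1), (0,1,-1), (0,-1,-1), (1,1,1), (-1,1,1), (1,-1,1), (-1,-1,1)}, the number s_n of walks of length n taking steps in S, starting at the origin, and remaining in ℕ^3 satisfies s_n = (8^n / n^{3/2}) · ( 8√2/(3π^{3/2}) − 8/(9π√n) + O(1/n) ) as n → ∞. -/

import Mathlib

open Finset Filter
open scoped Classical Real

noncomputable section

/-- The number of walks of length `n` with steps in `S`, starting at the origin and
never leaving `ℕ^d` (all partial sums have nonnegative coordinates). -/
def numWalks (d : ℕ) (S : Finset (Fin d → ℤ)) (n : ℕ) : ℕ :=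
  Finset.card (Finset.univ.filter fun f : Fin n → {i // i ∈ S} =>
    ∀ m : ℕ, m ≤ n → ∀ j : Fin d,
      0 ≤ ∑ k ∈ Finset.univ.filter (fun k : Fin n => (k : ℕ) < m), ((f k : Fin d → ℤ) j))

/-- Total weight of walks of length `n` with steps in `S` (weighted by `w`),
starting at the origin and never leaving `ℕ^d`. -/
def walkWeight (d : ℕ) (S : Finset (Fin d → ℤ)) (w : (Fin d → ℤ) → ℝ) (n : ℕ) : ℝ :=
  ∑ f : Fin n → {i // i ∈ S},
    if ∀ m : ℕ, m ≤ n → ∀ j : Fin d,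
        0 ≤ ∑ k ∈ Finset.univ.filter (fun k : Fin n => (k : ℕ) < m), ((f k : Fin d → ℤ) j)
    then ∏ k : Fin n, w (f k) else 0

/-!
Condition on the vertical moves. After `a` up-steps and `b` down-steps each horizontal coordinate
has performed a simple random walk, of lengths `a + i` and `a + (b - i)` with `i` binomial, and the
two walks are independent given `i`. By Wallis, a walk of length `m` stays nonnegative with
probability about `√(2 / (π m))`, so both do with probability about `4 / (π (2 a + b))`. As
`2 a + b = (3 n + h) / 2` for the final height `h = a - b`, the number of walks is about
`8 ^ n · 8 / (3 π n) · E[1 - (h + 1) / (3 n)]`, the expectation being taken over the vertical walk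
killed below `0`. There `z + 1` is harmonic, which makes the first moment of `h + 1` equal to `1`
and yields the correction term, while `(z + 1) ^ 3` is harmonic up to a multiple of `z + 1`, which
bounds the second moment by interpolation.
-/

/-- The path with steps `f` started at `p` keeps all its coordinates nonnegative. -/
def StaysInOrthant {d n : ℕ} (p : Fin d → ℤ) (f : Fin n → Fin d → ℤ) : Prop :=
  ∀ m : ℕ, m ≤ n → ∀ j : Fin d, 0 ≤ p j + ∑ k ∈ {k : Fin n | (k : ℕ) < m}, f k j

/-- The number of orthant walks of length `n` with steps in `S` started at `p`, a generalization
of `numWalks` that can be computed recursively by removing the first step. -/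
def numWalksFrom {d : ℕ} (S : Finset (Fin d → ℤ)) (n : ℕ) (p : Fin d → ℤ) : ℕ :=
  #{f : Fin n → {i // i ∈ S} | StaysInOrthant p fun k => (f k : Fin d → ℤ)}

section Orthant

variable {d : ℕ} (S : Finset (Fin d → ℤ)) (n : ℕ) (p : Fin d → ℤ)

lemma numWalks_eq_numWalksFrom_zero : numWalks d S n = numWalksFrom S n 0 := by
  simp [numWalks, numWalksFrom, StaysInOrthant]

lemma sum_filter_val_lt_succ {M : Type*} [AddCommMonoid M] (m : ℕ) (g : Fin (n + 1) → M) :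
    ∑ k ∈ {k : Fin (n + 1) | (k : ℕ) < m + 1}, g k =
      g 0 + ∑ k ∈ {k : Fin n | (k : ℕ) < m}, g k.succ := by
  simp [sum_filter, Fin.sum_univ_succ]

variable {n p} in
lemma staysInOrthant_cons {s : Fin d → ℤ} {f : Fin n → Fin d → ℤ} :
    StaysInOrthant p (Fin.cons s f : Fin (n + 1) → Fin d → ℤ) ↔
      0 ≤ p ∧ StaysInOrthant (p + s) f := by
  constructor
  · refine fun h => ⟨fun j => by simpa using h 0 (Nat.zero_le _) j, fun m hm j => ?_⟩
    simpa only [sum_filter_val_lt_succ, Fin.cons_zero, Fin.cons_succ, add_assoc, Pi.add_apply]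
      using h (m + 1) (by lia) j
  · rintro ⟨hp, h⟩ (_ | m) hm j
    · simpa using hp j
    · simpa only [sum_filter_val_lt_succ, Fin.cons_zero, Fin.cons_succ, add_assoc, Pi.add_apply]
        using h m (by lia) j

lemma numWalksFrom_zero : numWalksFrom S 0 p = if 0 ≤ p then 1 else 0 := by
  simp only [numWalksFrom, StaysInOrthant, Pi.le_def]
  split_ifs with h <;> simp_all

lemma numWalksFrom_succ :
    numWalksFrom S (n + 1) p = if 0 ≤ p then ∑ s ∈ S, numWalksFrom S n (p + s) else 0 := by
  have coe_cons (s : S) (f : Fin n → S) :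
      (fun k => ((Fin.cons s f : Fin (n + 1) → S) k : Fin d → ℤ)) =
        Fin.cons (s : Fin d → ℤ) fun k => (f k : Fin d → ℤ) := by
    funext k
    cases k using Fin.cases <;> rfl
  simp only [numWalksFrom, card_filter]
  rw [← (Fin.consEquiv fun _ : Fin (n + 1) => {i // i ∈ S}).sum_comp, Fintype.sum_prod_type,
    ← sum_coe_sort S]
  simp only [Fin.consEquiv_apply, coe_cons, staysInOrthant_cons]
  split_ifs with hp <;> simp [hp]

end Orthant

/-- The transfer operator of the walk on `ℤ` with up-steps weighted by `p` and down-steps weighted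
by `q`, killed outside the half-line `0 ≤ z`: `(killedStep p q ^ n) G z` is the sum, over the
`n`-step walks from `z` whose first `n` positions are nonnegative, of the weight of the walk times
the value of `G` at its endpoint. -/
def killedStep {R : Type*} [CommSemiring R] (p q : R) : Module.End R (ℤ → R) where
  toFun G z := if 0 ≤ z then p * G (z + 1) + q * G (z - 1) else 0
  map_add' G H := by
    funext z
    dsimp
    split_ifs <;> ring
  map_smul' c G := by
    funext z
    dsimp
    split_ifs <;> ring

section KilledStep

lemma killedStep_apply {R : Type*} [CommSemiring R] (p q : R) (G : ℤ → R) (z : ℤ) :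
    killedStep p q G z = if 0 ≤ z then p * G (z + 1) + q * G (z - 1) else 0 :=
  rfl

lemma killedStep_pow_succ_apply {R : Type*} [CommSemiring R] (p q : R) (n : ℕ) (G : ℤ → R)
    (z : ℤ) : (killedStep p q ^ (n + 1)) G z =
      if 0 ≤ z then p * (killedStep p q ^ n) G (z + 1) + q * (killedStep p q ^ n) G (z - 1)
      else 0 := by
  rw [pow_succ', Module.End.mul_apply, killedStep_apply]

lemma killedStep_pow_apply_of_neg {R : Type*} [CommSemiring R] (p q : R) (n : ℕ) {G : ℤ → R}
    {z : ℤ} (hz : z < 0) (hG : G z = 0) : (killedStep p q ^ n) G z = 0 := by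
  cases n with
  | zero => simpa using hG
  | succ n => rw [killedStep_pow_succ_apply, if_neg hz.not_ge]

variable {k A : Type*} [CommRing k] [PartialOrder k] [IsOrderedRing k] [CommRing A] [Algebra k A]

-- A walk with `a` up-steps and `b` down-steps has weight `c ^ (a + b) • (p ^ a * q ^ b)` and ends
-- at `a - b`; `L` can therefore be estimated one monomial at a time.
lemma map_killedStep_pow_le (L : A →ₗ[k] k) (p q : A) {c : k} (hc : 0 ≤ c) {F : ℤ → k} {n : ℕ}
    (hF : ∀ z < 0, 0 ≤ F z) (hL : ∀ a b : ℕ, b ≤ a → a + b = n → L (p ^ a * q ^ b) ≤ F (a - b)) :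
    L ((killedStep (c • p) (c • q) ^ n) ((Set.Ici 0).indicator 1) 0) ≤
      (killedStep c c ^ n) F 0 := by
  suffices ∀ (m a b : ℕ), a + b + m = n → ∀ z : ℤ, z = a - b →
      L (p ^ a * q ^ b * (killedStep (c • p) (c • q) ^ m) ((Set.Ici 0).indicator 1) z) ≤
        (killedStep c c ^ m) F z by
    simpa using this n 0 0 (by simp) 0 (by simp)
  intro m
  induction m with
  | zero =>
    intro a b hab z hz
    obtain hneg | hnonneg := lt_or_ge z 0
    · simpa [hneg.not_ge] using hF z hneg
    · rw [pow_zero, pow_zero, Module.End.one_apply, Module.End.one_apply,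
        Set.indicator_of_mem (Set.mem_Ici.mpr hnonneg), Pi.one_apply, mul_one, hz]
      exact hL a b (by lia) (by lia)
  | succ m ih =>
    intro a b hab z hz
    simp only [killedStep_pow_succ_apply]
    set G := (killedStep (c • p) (c • q) ^ m) ((Set.Ici 0).indicator 1)
    split_ifs
    · have hup := ih (a + 1) b (by lia) (z + 1) (by lia)
      have hdown := ih a (b + 1) (by lia) (z - 1) (by lia)
      calc L (p ^ a * q ^ b * (c • p * G (z + 1) + c • q * G (z - 1)))
          = L (c • (p ^ (a + 1) * q ^ b * G (z + 1)) + c • (p ^ a * q ^ (b + 1) * G (z - 1))) := by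
            simp only [Algebra.smul_def]
            ring_nf
        _ = c * L (p ^ (a + 1) * q ^ b * G (z + 1)) + c * L (p ^ a * q ^ (b + 1) * G (z - 1)) := by
            rw [map_add, map_smul, map_smul, smul_eq_mul, smul_eq_mul]
        _ ≤ c * (killedStep c c ^ m) F (z + 1) + c * (killedStep c c ^ m) F (z - 1) := by gcongr
    · simp

lemma le_map_killedStep_pow (L : A →ₗ[k] k) (p q : A) {c : k} (hc : 0 ≤ c) {F : ℤ → k} {n : ℕ}
    (hF : ∀ z < 0, F z ≤ 0) (hL : ∀ a b : ℕ, b ≤ a → a + b = n → F (a - b) ≤ L (p ^ a * q ^ b)) :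
    (killedStep c c ^ n) F 0 ≤
      L ((killedStep (c • p) (c • q) ^ n) ((Set.Ici 0).indicator 1) 0) := by
  simpa using map_killedStep_pow_le (-L) p q hc (F := -F) (n := n) (by simpa using hF)
    (by simpa using hL)

end KilledStep

/-- The function `z ↦ max (z + 1) 0`, harmonic for the simple random walk killed below `0`. -/
def killedHarmonic (z : ℤ) : ℝ := (z + 1).toNat

lemma killedHarmonic_of_nonneg {z : ℤ} (hz : 0 ≤ z + 1) : killedHarmonic z = z + 1 := by
  rw [killedHarmonic, ← Int.cast_natCast, Int.toNat_of_nonneg hz]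
  push_cast
  rfl

lemma killedHarmonic_of_neg {z : ℤ} (hz : z < 0) : killedHarmonic z = 0 := by
  simpa [killedHarmonic] using hz

lemma killedStep_killedHarmonic : killedStep 2⁻¹ 2⁻¹ killedHarmonic = killedHarmonic := by
  funext z
  rw [killedStep_apply]
  split_ifs with hz
  · rw [killedHarmonic_of_nonneg (by lia), killedHarmonic_of_nonneg (by lia),
      killedHarmonic_of_nonneg (by lia)]
    push_cast
    ring
  · rw [killedHarmonic_of_neg (not_le.mp hz)]

lemma killedStep_killedHarmonic_cube :
    killedStep 2⁻¹ 2⁻¹ (killedHarmonic ^ 3) = killedHarmonic ^ 3 + (3 : ℝ) • killedHarmonic := by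
  funext z
  simp only [killedStep_apply, Pi.add_apply, Pi.smul_apply, Pi.pow_apply, smul_eq_mul]
  split_ifs with hz
  · rw [killedHarmonic_of_nonneg (by lia), killedHarmonic_of_nonneg (by lia),
      killedHarmonic_of_nonneg (by lia)]
    push_cast
    ring
  · rw [killedHarmonic_of_neg (not_le.mp hz)]
    ring

lemma killedStep_pow_killedHarmonic (n : ℕ) :
    (killedStep 2⁻¹ 2⁻¹ ^ n) killedHarmonic = killedHarmonic := by
  induction n with
  | zero => simp
  | succ n ih => rw [pow_succ, Module.End.mul_apply, killedStep_killedHarmonic, ih]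

lemma killedStep_pow_killedHarmonic_cube (n : ℕ) :
    (killedStep 2⁻¹ 2⁻¹ ^ n) (killedHarmonic ^ 3) =
      killedHarmonic ^ 3 + (3 * n : ℝ) • killedHarmonic := by
  induction n with
  | zero => simp
  | succ n ih =>
    rw [pow_succ, Module.End.mul_apply, killedStep_killedHarmonic_cube, map_add, map_smul, ih,
      killedStep_pow_killedHarmonic]
    push_cast
    module

/-- The probability that a simple random walk of `n` steps on `ℤ` started at `x` stays
nonnegative. -/
def survival (n : ℕ) (x : ℤ) : ℝ := (killedStep 2⁻¹ 2⁻¹ ^ n) ((Set.Ici 0).indicator 1) x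

lemma survival_zero_of_nonneg {x : ℤ} (hx : 0 ≤ x) : survival 0 x = 1 := by
  simp [survival, hx]

lemma survival_of_neg (n : ℕ) {x : ℤ} (hx : x < 0) : survival n x = 0 :=
  killedStep_pow_apply_of_neg _ _ _ hx (by simp [hx])

lemma survival_succ (n : ℕ) {x : ℤ} (hx : 0 ≤ x) :
    survival (n + 1) x = (survival n (x + 1) + survival n (x - 1)) / 2 := by
  rw [survival, killedStep_pow_succ_apply, if_pos hx, ← survival, ← survival]
  ring

section SurvivalFunctional

open MvPolynomial

variable {σ : Type*} [Fintype σ]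

/-- The linear functional sending the monomial `∏ i, X i ^ m i` to `∏ i, survival (m i) (x i)`. It
evaluates the operator polynomials in the commuting one-dimensional walk operators in the
coordinate directions, applied to the indicator of the orthant, at the point `x`. -/
def survivalFunctional (x : σ → ℤ) : MvPolynomial σ ℝ →ₗ[ℝ] ℝ :=
  (basisMonomials σ ℝ).constr ℝ fun m => ∏ i, survival (m i) (x i)

lemma survivalFunctional_monomial (x : σ → ℤ) (m : σ →₀ ℕ) :
    survivalFunctional x (monomial m 1) = ∏ i, survival (m i) (x i) := by
  simpa [survivalFunctional] using
    (basisMonomials σ ℝ).constr_basis ℝ (fun m => ∏ i, survival (m i) (x i)) m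

lemma survivalFunctional_one {x : σ → ℤ} (hx : 0 ≤ x) : survivalFunctional x 1 = 1 := by
  rw [← C_1, ← monomial_zero', survivalFunctional_monomial]
  exact prod_eq_one fun i _ => survival_zero_of_nonneg (hx i)

lemma survivalFunctional_of_neg {x : σ → ℤ} {i : σ} (hi : x i < 0) : survivalFunctional x = 0 := by
  refine (basisMonomials σ ℝ).ext fun m => ?_
  rw [coe_basisMonomials, survivalFunctional_monomial, LinearMap.zero_apply]
  exact prod_eq_zero (mem_univ i) (survival_of_neg _ hi)

lemma survivalFunctional_X_mul {x : σ → ℤ} {i : σ} (hi : 0 ≤ x i) (P : MvPolynomial σ ℝ) :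
    survivalFunctional x (X i * P) =
      (survivalFunctional (x + Pi.single i 1) P +
        survivalFunctional (x - Pi.single i 1) P) / 2 := by
  suffices survivalFunctional x ∘ₗ LinearMap.mulLeft ℝ (X i) =
      (2⁻¹ : ℝ) • (survivalFunctional (x + Pi.single i 1) +
        survivalFunctional (x - Pi.single i 1)) by
    simpa [div_eq_inv_mul, mul_add] using LinearMap.congr_fun this P
  refine (basisMonomials σ ℝ).ext fun m => ?_
  have hX : X i * monomial m (1 : ℝ) = monomial (m + Finsupp.single i 1) 1 := by
    rw [X, monomial_mul, one_mul, add_comm]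
  have hprod (m' : σ →₀ ℕ) (x' : σ → ℤ) (hm : ∀ j ≠ i, m' j = m j) (hx : ∀ j ≠ i, x' j = x j) :
      ∏ j, survival (m' j) (x' j) =
        survival (m' i) (x' i) * ∏ j ∈ univ.erase i, survival (m j) (x j) := by
    rw [← mul_prod_erase univ _ (mem_univ i)]
    congr 1
    refine prod_congr rfl fun j hj => ?_
    rw [hm j (ne_of_mem_erase hj), hx j (ne_of_mem_erase hj)]
  simp only [coe_basisMonomials, LinearMap.comp_apply, LinearMap.mulLeft_apply, hX,
    LinearMap.smul_apply, LinearMap.add_apply, survivalFunctional_monomial, smul_eq_mul]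
  rw [hprod (m + Finsupp.single i 1) x (by simp +contextual) (by simp),
    hprod m (x + Pi.single i 1) (by simp) (by simp +contextual),
    hprod m (x - Pi.single i 1) (by simp) (by simp +contextual)]
  simp only [Finsupp.add_apply, Finsupp.single_eq_same, Pi.add_apply, Pi.sub_apply,
    Pi.single_eq_same, survival_succ _ hi]
  ring

end SurvivalFunctional

section OctantWalk

open MvPolynomial

/-- The step set `{(±1, 0, -1), (0, ±1, -1), (±1, ±1, 1)}`. -/
def steps : Finset (Fin 3 → ℤ) :=
  {![1, 0, -1], ![-1, 0, -1], ![0, 1, -1], ![0, -1, -1],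
    ![1, 1, 1], ![-1, 1, 1], ![1, -1, 1], ![-1, -1, 1]}

/-- The polynomial of the diagonal steps `(±1, ±1)` of the planar walk, which accompany the
up-steps of the third coordinate. -/
def diagonalStep : MvPolynomial (Fin 2) ℝ := X 0 * X 1

/-- The polynomial of the axis-parallel steps of the planar walk, which accompany the down-steps of
the third coordinate. -/
def axisStep : MvPolynomial (Fin 2) ℝ := (2⁻¹ : ℝ) • (X 0 + X 1)

lemma survivalFunctional_X_zero_mul {x : ℤ} (hx : 0 ≤ x) (y : ℤ) (P : MvPolynomial (Fin 2) ℝ) :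
    survivalFunctional ![x, y] (X 0 * P) =
      (survivalFunctional ![x + 1, y] P + survivalFunctional ![x - 1, y] P) / 2 := by
  rw [survivalFunctional_X_mul (by simpa using hx)]
  simp [Matrix.vecHead, Matrix.vecTail]

lemma survivalFunctional_X_one_mul (x : ℤ) {y : ℤ} (hy : 0 ≤ y) (P : MvPolynomial (Fin 2) ℝ) :
    survivalFunctional ![x, y] (X 1 * P) =
      (survivalFunctional ![x, y + 1] P + survivalFunctional ![x, y - 1] P) / 2 := by
  rw [survivalFunctional_X_mul (by simpa using hy)]
  simp [Matrix.vecHead, Matrix.vecTail]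

lemma survivalFunctional_diagonalStep_mul {x y : ℤ} (hx : 0 ≤ x) (hy : 0 ≤ y)
    (P : MvPolynomial (Fin 2) ℝ) :
    survivalFunctional ![x, y] (diagonalStep * P) =
      (survivalFunctional ![x + 1, y + 1] P + survivalFunctional ![x - 1, y + 1] P +
        survivalFunctional ![x + 1, y - 1] P + survivalFunctional ![x - 1, y - 1] P) / 4 := by
  rw [diagonalStep, mul_assoc, survivalFunctional_X_zero_mul hx, survivalFunctional_X_one_mul _ hy,
    survivalFunctional_X_one_mul _ hy]
  ring

lemma survivalFunctional_axisStep_mul {x y : ℤ} (hx : 0 ≤ x) (hy : 0 ≤ y)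
    (P : MvPolynomial (Fin 2) ℝ) :
    survivalFunctional ![x, y] (axisStep * P) =
      (survivalFunctional ![x + 1, y] P + survivalFunctional ![x - 1, y] P +
        survivalFunctional ![x, y + 1] P + survivalFunctional ![x, y - 1] P) / 4 := by
  rw [axisStep, smul_mul_assoc, map_smul, add_mul, map_add, survivalFunctional_X_zero_mul hx,
    survivalFunctional_X_one_mul _ hy, smul_eq_mul]
  ring

lemma sum_steps {M : Type*} [AddCommMonoid M] (g : (Fin 3 → ℤ) → M) : ∑ s ∈ steps, g s =
    (g ![1, 1, 1] + g ![-1, 1, 1] + g ![1, -1, 1] + g ![-1, -1, 1]) +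
    (g ![1, 0, -1] + g ![-1, 0, -1] + g ![0, 1, -1] + g ![0, -1, -1]) := by
  unfold steps
  repeat rw [sum_insert (by decide)]
  rw [sum_singleton]
  abel

lemma numWalksFrom_steps (n : ℕ) (x y z : ℤ) : (numWalksFrom steps n ![x, y, z] : ℝ) =
    8 ^ n * survivalFunctional ![x, y]
      ((killedStep ((2⁻¹ : ℝ) • diagonalStep) ((2⁻¹ : ℝ) • axisStep) ^ n)
        ((Set.Ici 0).indicator 1) z) := by
  have nonneg_iff : 0 ≤ ![x, y, z] ↔ 0 ≤ x ∧ 0 ≤ y ∧ 0 ≤ z := by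
    simp [Pi.le_def, Fin.forall_fin_succ]
  by_cases hpos : 0 ≤ ![x, y, z]
  · obtain ⟨hx, hy, hz⟩ := nonneg_iff.mp hpos
    cases n with
    | zero =>
      have hxy : 0 ≤ ![x, y] := by simp [Pi.le_def, Fin.forall_fin_succ, hx, hy]
      simp [numWalksFrom_zero, hpos, hz, survivalFunctional_one hxy]
    | succ n =>
      rw [numWalksFrom_succ, if_pos hpos, sum_steps, killedStep_pow_succ_apply, if_pos hz]
      simp only [Matrix.cons_add_cons, Matrix.empty_add_empty, add_zero, ← sub_eq_add_neg,
        Nat.cast_add, numWalksFrom_steps n, smul_mul_assoc, map_add, map_smul, smul_eq_mul,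
        survivalFunctional_diagonalStep_mul hx hy, survivalFunctional_axisStep_mul hx hy]
      ring
  · have hzero : numWalksFrom steps n ![x, y, z] = 0 := by
      cases n <;> simp [numWalksFrom_zero, numWalksFrom_succ, hpos]
    rw [hzero, Nat.cast_zero]
    rw [nonneg_iff] at hpos
    by_cases hx : 0 ≤ x
    · by_cases hy : 0 ≤ y
      · have hz : z < 0 := by lia
        rw [killedStep_pow_apply_of_neg _ _ _ hz (by simp [hz]), map_zero, mul_zero]
      · rw [survivalFunctional_of_neg (i := 1) (by simpa using hy), LinearMap.zero_apply, mul_zero]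
    · rw [survivalFunctional_of_neg (i := 0) (by simpa using hx), LinearMap.zero_apply, mul_zero]

lemma numWalks_steps (n : ℕ) : (numWalks 3 steps n : ℝ) =
    8 ^ n * survivalFunctional 0
      ((killedStep ((2⁻¹ : ℝ) • diagonalStep) ((2⁻¹ : ℝ) • axisStep) ^ n)
        ((Set.Ici 0).indicator 1) 0) := by
  simpa only [numWalks_eq_numWalksFrom_zero, Matrix.cons_zero_zero, ← Matrix.zero_empty] using
    numWalksFrom_steps n 0 0 0

end OctantWalk

section SurvivalEstimates

lemma two_pow_mul_survival (n x : ℕ) :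
    2 ^ n * survival n x = ∑ t ∈ range (x + 1), (n.choose ((n + t + 1) / 2) : ℝ) := by
  induction n generalizing x with
  | zero =>
    rw [sum_range_succ', sum_eq_zero]
    · simp [survival_zero_of_nonneg]
    · intro t _
      rw [Nat.choose_eq_zero_of_lt (by lia), Nat.cast_zero]
  | succ n ih =>
    have pascal (t : ℕ) : ((n + 1).choose ((n + 1 + t + 1) / 2) : ℝ) =
        n.choose ((n + t) / 2) + n.choose ((n + (t + 1) + 1) / 2) := by
      rw [show (n + 1 + t + 1) / 2 = (n + t) / 2 + 1 by lia,
        show (n + (t + 1) + 1) / 2 = (n + t) / 2 + 1 by lia, Nat.choose_succ_succ, Nat.cast_add]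
    have middle : n.choose (n / 2) = n.choose ((n + 1) / 2) := by
      rw [← Nat.choose_symm (Nat.div_le_self n 2)]
      congr 1
      lia
    have left : 2 ^ n * survival n (x - 1) = ∑ t ∈ range x, (n.choose ((n + (t + 1)) / 2) : ℝ) := by
      cases x with
      | zero => simp [survival_of_neg]
      | succ x => simpa [add_assoc] using ih x
    have right : 2 ^ n * survival n (x + 1) =
        n.choose ((n + 1) / 2) + ∑ t ∈ range (x + 1), (n.choose ((n + (t + 1) + 1) / 2) : ℝ) := by
      rw [add_comm (n.choose _ : ℝ), ← sum_range_succ' fun t => (n.choose ((n + t + 1) / 2) : ℝ)]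
      exact_mod_cast ih (x + 1)
    calc 2 ^ (n + 1) * survival (n + 1) x
        = 2 ^ n * survival n (x - 1) + 2 ^ n * survival n (x + 1) := by
          rw [survival_succ _ (by positivity)]
          ring
      _ = (∑ t ∈ range (x + 1), (n.choose ((n + t) / 2) : ℝ)) +
            ∑ t ∈ range (x + 1), (n.choose ((n + (t + 1) + 1) / 2) : ℝ) := by
          rw [left, right, sum_range_succ' fun t => (n.choose ((n + t) / 2) : ℝ), add_zero, middle]
          ring
      _ = _ := by simp only [pascal, sum_add_distrib]

lemma two_pow_mul_survival_zero (n : ℕ) : 2 ^ n * survival n 0 = n.choose ((n + 1) / 2) := by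
  simpa using two_pow_mul_survival n 0

lemma survival_zero_pos (n : ℕ) : 0 < survival n 0 := by
  refine pos_of_mul_pos_right ?_ (pow_nonneg zero_le_two n)
  rw [two_pow_mul_survival_zero]
  exact_mod_cast Nat.choose_pos (by lia)

lemma four_pow_mul_survival_two_mul (k : ℕ) : 4 ^ k * survival (2 * k) 0 = k.centralBinom := by
  have h := two_pow_mul_survival_zero (2 * k)
  rwa [pow_mul, show (2 * k + 1) / 2 = k by lia, ← Nat.centralBinom_eq_two_mul_choose,
    show (2 : ℝ) ^ 2 = 4 by norm_num] at h

lemma survival_two_mul_add_one (k : ℕ) : survival (2 * k + 1) 0 = survival (2 * k + 2) 0 := by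
  have hodd := two_pow_mul_survival_zero (2 * k + 1)
  have heven := four_pow_mul_survival_two_mul (k + 1)
  rw [show (2 * k + 1 + 1) / 2 = k + 1 by lia] at hodd
  have hbinom : ((k + 1).centralBinom : ℝ) = 2 * (2 * k + 1).choose (k + 1) := by
    rw [Nat.centralBinom_eq_two_mul_choose, mul_add_one, Nat.choose_succ_succ,
      Nat.choose_symm_half]
    push_cast
    ring
  rw [hbinom, ← hodd, mul_add_one 2 k, pow_succ, pow_succ, pow_mul,
    show (2 : ℝ) ^ 2 = 4 by norm_num] at heven
  have hpow : (4 : ℝ) ^ k * 4 ≠ 0 := by positivity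
  exact mul_left_cancel₀ hpow (by linarith)

open Real.Wallis in
lemma wallis_mul_survival_sq (k : ℕ) : W k * ((2 * k + 1) * survival (2 * k) 0 ^ 2) = 1 := by
  have hfact : (k.centralBinom : ℝ) * k.factorial * k.factorial = (2 * k).factorial := by
    have h := Nat.choose_mul_factorial_mul_factorial (show k ≤ 2 * k by lia)
    rw [show 2 * k - k = k by lia, ← Nat.centralBinom_eq_two_mul_choose] at h
    exact_mod_cast h
  have hpos := survival_zero_pos (2 * k)
  rw [W_eq_factorial_ratio, ← hfact, ← four_pow_mul_survival_two_mul, pow_mul,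
    show (2 : ℝ) ^ 4 = 4 ^ 2 by norm_num]
  field_simp
  rw [pow_right_comm]

lemma survival_two_mul_sq_le (k : ℕ) : survival (2 * k) 0 ^ 2 * (π * (2 * k)) ≤ 2 := by
  set c := survival (2 * k) 0 ^ 2
  have : 0 ≤ c := sq_nonneg _
  have wallis : (2 * k + 1) / (2 * k + 2) * (π / 2) * ((2 * k + 1) * c) ≤ 1 :=
    (mul_le_mul_of_nonneg_right (Real.Wallis.le_W k) (by positivity)).trans_eq
      (wallis_mul_survival_sq k)
  have hsq : (2 * k * (2 * k + 2) : ℝ) ≤ (2 * k + 1) ^ 2 := by linarith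
  calc c * (π * (2 * k)) = c * π * (2 * k * (2 * k + 2)) / (2 * k + 2) := by field_simp
    _ ≤ c * π * (2 * k + 1) ^ 2 / (2 * k + 2) := by gcongr
    _ = 2 * ((2 * k + 1) / (2 * k + 2) * (π / 2) * ((2 * k + 1) * c)) := by field_simp
    _ ≤ 2 := by linarith

lemma le_survival_two_mul_sq (k : ℕ) : 2 ≤ survival (2 * k) 0 ^ 2 * (π * (2 * k + 1)) := by
  calc 2 = Real.Wallis.W k * ((2 * k + 1) * survival (2 * k) 0 ^ 2) * 2 := by
        rw [wallis_mul_survival_sq, one_mul]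
    _ ≤ π / 2 * ((2 * k + 1) * survival (2 * k) 0 ^ 2) * 2 := by
        gcongr
        exact Real.Wallis.W_le k
    _ = _ := by ring

lemma survival_sq_le (n : ℕ) : survival n 0 ^ 2 * (π * n) ≤ 2 := by
  rcases n.even_or_odd' with ⟨k, rfl | rfl⟩
  · simpa using survival_two_mul_sq_le k
  · refine le_trans ?_ (survival_two_mul_sq_le (k + 1))
    rw [survival_two_mul_add_one, mul_add_one]
    push_cast
    gcongr
    linarith

lemma le_survival_sq (n : ℕ) : 2 ≤ survival n 0 ^ 2 * (π * (n + 2)) := by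
  rcases n.even_or_odd' with ⟨k, rfl | rfl⟩
  · refine (le_survival_two_mul_sq k).trans ?_
    push_cast
    gcongr
    norm_num
  · refine (le_survival_two_mul_sq (k + 1)).trans (le_of_eq ?_)
    rw [survival_two_mul_add_one, mul_add_one]
    push_cast
    ring

end SurvivalEstimates

section SurvivalProducts

lemma le_survival_mul_survival (i j : ℕ) :
    4 / (π * (i + j + 4)) ≤ survival i 0 * survival j 0 := by
  have hi := survival_zero_pos i
  have hj := survival_zero_pos j
  refine le_of_sq_le_sq ?_ (by positivity)
  have amgm : ((i + 2) * (j + 2) : ℝ) ≤ ((i + j + 4) / 2) ^ 2 := by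
    linarith [sq_nonneg (i - j : ℝ)]
  calc (4 / (π * (i + j + 4))) ^ 2 = 4 / (π ^ 2 * ((i + j + 4 : ℝ) / 2) ^ 2) := by
        field_simp
        norm_num
    _ ≤ 4 / (π ^ 2 * ((i + 2) * (j + 2))) := by gcongr
    _ = 2 * 2 / ((π * (i + 2)) * (π * (j + 2))) := by
        ring_nf
    _ ≤ (survival i 0 * survival j 0) ^ 2 := by
        rw [div_le_iff₀ (by positivity)]
        calc (2 : ℝ) * 2
            ≤ survival i 0 ^ 2 * (π * (i + 2)) * (survival j 0 ^ 2 * (π * (j + 2))) := by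
              gcongr <;> exact le_survival_sq _
          _ = _ := by ring

lemma survival_mul_survival_le {i j : ℕ} (hi : 0 < i) (hj : 0 < j)
    (hij : 2 * ((i : ℝ) - j) ^ 2 ≤ ((i : ℝ) + j) ^ 2) :
    survival i 0 * survival j 0 ≤
      4 / (π * (i + j)) * (1 + ((i : ℝ) - j) ^ 2 / ((i : ℝ) + j) ^ 2) := by
  have hvi := survival_zero_pos i
  have hvj := survival_zero_pos j
  refine le_of_sq_le_sq ?_ (by positivity)
  set t := ((i : ℝ) - j) ^ 2 / ((i : ℝ) + j) ^ 2 with ht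
  have ht0 : 0 ≤ t := by positivity
  have ht1 : t ≤ 1 / 2 := by
    rw [ht, div_le_div_iff₀ (by positivity) (by positivity)]
    linarith
  have hprod : (4 * i * j : ℝ) = (i + j) ^ 2 * (1 - t) := by
    rw [ht]
    field_simp
    ring
  have hcube : 1 ≤ (1 - t) * (1 + t) ^ 2 := by
    have : 0 ≤ t * (1 - t - t ^ 2) := mul_nonneg ht0 (by nlinarith)
    linarith
  have hupper : (survival i 0 * survival j 0) ^ 2 * (π ^ 2 * (4 * i * j)) ≤ 16 := by
    calc _ = 4 * (survival i 0 ^ 2 * (π * i) * (survival j 0 ^ 2 * (π * j))) := by ring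
      _ ≤ 4 * (2 * 2) := by gcongr <;> exact survival_sq_le _
      _ = 16 := by norm_num
  calc (survival i 0 * survival j 0) ^ 2
      ≤ (survival i 0 * survival j 0) ^ 2 * ((1 - t) * (1 + t) ^ 2) :=
        le_mul_of_one_le_right (by positivity) hcube
    _ = (survival i 0 * survival j 0) ^ 2 * (π ^ 2 * (4 * i * j)) *
          ((1 + t) ^ 2 / (π * (i + j)) ^ 2) := by
        rw [hprod]
        field_simp
    _ ≤ 16 * ((1 + t) ^ 2 / (π * (i + j)) ^ 2) := by gcongr
    _ = (4 / (π * (i + j)) * (1 + t)) ^ 2 := by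
        rw [mul_pow (4 / _), div_pow]
        ring

end SurvivalProducts

section QuadrantSurvival

lemma sum_antidiagonal_choose (b : ℕ) : ∑ m ∈ antidiagonal b, (b.choose m.1 : ℝ) = 2 ^ b := by
  exact_mod_cast (Nat.sum_antidiagonal_eq_sum_range_succ_mk _ b).trans (Nat.sum_range_choose b)

lemma sum_antidiagonal_choose_mul_sub_sq (b : ℕ) :
    ∑ m ∈ antidiagonal b, (b.choose m.1 : ℝ) * ((m.1 : ℝ) - m.2) ^ 2 = 2 ^ b * b := by
  induction b with
  | zero => simp
  | succ b ih =>
    rw [sum_antidiagonal_choose_succ_mul fun i j => ((i : ℝ) - j) ^ 2, ← sum_add_distrib]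
    calc _ = ∑ m ∈ antidiagonal b,
          (2 * ((b.choose m.1 : ℝ) * ((m.1 : ℝ) - m.2) ^ 2) + 2 * (b.choose m.1 : ℝ)) := by
          refine sum_congr rfl fun m hm => ?_
          rw [← Nat.choose_symm_of_eq_add (mem_antidiagonal.mp hm).symm]
          push_cast
          ring
      _ = _ := by
          rw [sum_add_distrib, ← mul_sum, ← mul_sum, ih, sum_antidiagonal_choose]
          push_cast
          ring

open MvPolynomial in
lemma survivalFunctional_zero_X_pow_mul (i j : ℕ) :
    survivalFunctional (0 : Fin 2 → ℤ) (X 0 ^ i * X 1 ^ j) = survival i 0 * survival j 0 := by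
  rw [X_pow_eq_monomial, X_pow_eq_monomial, monomial_mul, one_mul, survivalFunctional_monomial]
  simp [Fin.prod_univ_two]

/-- The probability that a planar walk started at the origin and consisting of `a` random diagonal
steps and `b` random axis-parallel steps stays in the quadrant. -/
def quadrantSurvival (a b : ℕ) : ℝ :=
  survivalFunctional (0 : Fin 2 → ℤ) (diagonalStep ^ a * axisStep ^ b)

lemma quadrantSurvival_eq_sum (a b : ℕ) : quadrantSurvival a b =
    (∑ m ∈ antidiagonal b, b.choose m.1 * (survival (a + m.1) 0 * survival (a + m.2) 0)) /
      2 ^ b := by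
  rw [quadrantSurvival, diagonalStep, axisStep, smul_pow, (Commute.all _ _).add_pow', mul_smul_comm,
    map_smul, mul_sum, map_sum, smul_eq_mul, inv_pow, inv_mul_eq_div]
  congr 1
  refine sum_congr rfl fun m _ => ?_
  rw [← survivalFunctional_zero_X_pow_mul, mul_smul_comm, map_nsmul, nsmul_eq_mul, pow_add, pow_add,
    mul_pow, mul_mul_mul_comm]

lemma le_quadrantSurvival (a b : ℕ) : 4 / (π * (2 * a + b + 4)) ≤ quadrantSurvival a b := by
  rw [quadrantSurvival_eq_sum, le_div_iff₀ (by positivity), ← sum_antidiagonal_choose, mul_sum]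
  refine sum_le_sum fun m hm => ?_
  have hb : (b : ℝ) = m.1 + m.2 := by exact_mod_cast (mem_antidiagonal.mp hm).symm
  rw [mul_comm]
  gcongr
  refine Eq.trans_le ?_ (le_survival_mul_survival _ _)
  rw [hb]
  push_cast
  ring_nf

lemma quadrantSurvival_le {a b : ℕ} (ha : 0 < a) (hab : b ≤ a) :
    quadrantSurvival a b ≤ 4 / (π * (2 * a + b)) * (1 + 1 / (a + b)) := by
  have hab' : (b : ℝ) ≤ a := by exact_mod_cast hab
  have term_le (m : ℕ × ℕ) (hm : m ∈ antidiagonal b) :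
      survival (a + m.1) 0 * survival (a + m.2) 0 ≤
        4 / (π * (2 * a + b)) * (1 + ((m.1 : ℝ) - m.2) ^ 2 / (2 * a + b) ^ 2) := by
    have hb : (b : ℝ) = m.1 + m.2 := by exact_mod_cast (mem_antidiagonal.mp hm).symm
    have hadd : (2 * a + b : ℝ) = (a + m.1 : ℕ) + (a + m.2 : ℕ) := by
      rw [hb]
      push_cast
      ring
    have hsub : (m.1 - m.2 : ℝ) = (a + m.1 : ℕ) - (a + m.2 : ℕ) := by
      push_cast
      ring
    rw [hadd, hsub]
    refine survival_mul_survival_le (by lia) (by lia) ?_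
    rw [← hadd, ← hsub]
    nlinarith [mul_nonneg (Nat.cast_nonneg (α := ℝ) m.1) (Nat.cast_nonneg (α := ℝ) m.2)]
  have mean_eq : (∑ m ∈ antidiagonal b, (b.choose m.1 : ℝ) *
      (4 / (π * (2 * a + b)) * (1 + ((m.1 : ℝ) - m.2) ^ 2 / (2 * a + b) ^ 2))) =
        4 / (π * (2 * a + b)) * (2 ^ b + 2 ^ b * b / (2 * a + b) ^ 2) := by
    rw [← sum_antidiagonal_choose_mul_sub_sq, ← sum_antidiagonal_choose, sum_div,
      ← sum_add_distrib, mul_sum]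
    exact sum_congr rfl fun m _ => by ring
  calc quadrantSurvival a b
      ≤ 4 / (π * (2 * a + b)) * (2 ^ b + 2 ^ b * b / (2 * a + b) ^ 2) / 2 ^ b := by
        rw [quadrantSurvival_eq_sum, ← mean_eq]
        gcongr ?_ / _
        exact sum_le_sum fun m hm => mul_le_mul_of_nonneg_left (term_le m hm) (Nat.cast_nonneg _)
    _ = 4 / (π * (2 * a + b)) * (1 + b / (2 * a + b) ^ 2) := by field_simp
    _ ≤ 4 / (π * (2 * a + b)) * (1 + 1 / (a + b)) := by
        gcongr 4 / (π * (2 * a + b)) * (1 + ?_)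
        rw [div_le_div_iff₀ (by positivity) (by positivity)]
        nlinarith [mul_nonneg (Nat.cast_nonneg (α := ℝ) a) (Nat.cast_nonneg (α := ℝ) b)]

end QuadrantSurvival

section OctantEstimates

variable {n : ℕ}

lemma le_quadrantSurvival_of_add_eq {a b : ℕ} (hn : 0 < n) (hab : a + b = n) (hba : b ≤ a) :
    8 / (3 * π * n) * (1 - 7 / (3 * n) - (a - b + 1) / (3 * n)) ≤ quadrantSurvival a b := by
  have hba' : (b : ℝ) ≤ a := by exact_mod_cast hba
  set x : ℝ := (a - b + 8) / (3 * n) with hx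
  have hx0 : 0 ≤ x := div_nonneg (by linarith) (by positivity)
  have hlength : (2 * a + b + 4 : ℝ) = 3 * n * (1 + x) / 2 := by
    have hn' : (n : ℝ) = a + b := by exact_mod_cast hab.symm
    rw [hx]
    field_simp
    linarith
  calc 8 / (3 * π * n) * (1 - 7 / (3 * n) - (a - b + 1) / (3 * n))
      = 8 / (3 * π * n) * (1 - x) := by ring
    _ ≤ 8 / (3 * π * n) * (1 / (1 + x)) := by
        gcongr
        rw [le_div_iff₀ (by positivity)]
        nlinarith
    _ = 4 / (π * (2 * a + b + 4)) := by
        rw [hlength]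
        field_simp
        norm_num
    _ ≤ quadrantSurvival a b := le_quadrantSurvival a b

lemma quadrantSurvival_le_of_add_eq {a b : ℕ} (hn : 0 < n) (hab : a + b = n) (hba : b ≤ a) :
    quadrantSurvival a b ≤ 8 / (3 * π * n) * (1 + 1 / n) *
      (1 + 1 / (3 * n) - (a - b + 1) / (3 * n) + ((a - b + 1) / (3 * n)) ^ 2) := by
  have hba' : (b : ℝ) ≤ a := by exact_mod_cast hba
  set x : ℝ := (a - b) / (3 * n) with hx
  have hx0 : 0 ≤ x := div_nonneg (by linarith) (by positivity)
  have hlength : (2 * a + b : ℝ) = 3 * n * (1 + x) / 2 := by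
    have hn' : (n : ℝ) = a + b := by exact_mod_cast hab.symm
    rw [hx]
    field_simp
    linarith
  have hsucc : (a - b + 1) / (3 * n) = x + 1 / (3 * n : ℝ) := by ring
  calc quadrantSurvival a b
      ≤ 4 / (π * (2 * a + b)) * (1 + 1 / (a + b)) := quadrantSurvival_le (by lia) hba
    _ = 8 / (3 * π * n) * (1 + 1 / n) * (1 / (1 + x)) := by
        rw [hlength, ← Nat.cast_add, hab]
        field_simp
        norm_num
    _ ≤ 8 / (3 * π * n) * (1 + 1 / n) * (1 - x + x ^ 2) := by
        gcongr
        rw [div_le_iff₀ (by positivity)]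
        linarith [pow_nonneg hx0 3]
    _ ≤ _ := by
        gcongr ?_ * ?_
        have : x ^ 2 ≤ (x + 1 / (3 * n)) ^ 2 := by
          gcongr
          exact le_add_of_nonneg_right (by positivity)
        rw [hsucc]
        linarith

-- The square is replaced by a combination of the first and third powers, whose expectations are
-- provided by the harmonicity of `killedHarmonic`.
lemma quadrantSurvival_le_cubic {a b : ℕ} (hn : 0 < n) (hab : a + b = n) (hba : b ≤ a) :
    quadrantSurvival a b ≤ 8 / (3 * π * n) * (1 + 1 / n) *
      (1 + 1 / (3 * n) - 1 / (3 * n) * (a - b + 1) +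
        1 / (18 * n ^ 2) * (√n * (a - b + 1) + 1 / √n * (a - b + 1) ^ 3)) := by
  refine (quadrantSurvival_le_of_add_eq hn hab hba).trans ?_
  have hr : 0 < √(n : ℝ) := Real.sqrt_pos.mpr (by exact_mod_cast hn)
  have hh : (0 : ℝ) ≤ a - b + 1 := by
    have : (b : ℝ) ≤ a := by exact_mod_cast hba
    linarith
  set r := √(n : ℝ)
  set h : ℝ := a - b + 1
  have amgm : 2 * h ^ 2 ≤ r * h + 1 / r * h ^ 3 := by
    have hsq : 0 ≤ h * (r - h) ^ 2 / r := by positivity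
    have expand : h * (r - h) ^ 2 / r = r * h + 1 / r * h ^ 3 - 2 * h ^ 2 := by
      field_simp
      ring
    linarith
  gcongr _ * ?_
  calc 1 + 1 / (3 * n) - h / (3 * n) + (h / (3 * n)) ^ 2
      = 1 + 1 / (3 * n) - 1 / (3 * n) * h + 1 / (18 * n ^ 2) * (2 * h ^ 2) := by ring
    _ ≤ _ := by gcongr

lemma le_numWalks_steps (hn : 0 < n) :
    8 ^ n * (8 / (3 * π * n) * ((1 - 7 / (3 * n)) * survival n 0 - 1 / (3 * n))) ≤
      numWalks 3 steps n := by
  rw [numWalks_steps]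
  gcongr
  set F : ℤ → ℝ := (8 / (3 * π * n)) •
    ((1 - 7 / (3 * n) : ℝ) • (Set.Ici 0).indicator 1 - (1 / (3 * n) : ℝ) • killedHarmonic) with hF
  have map_F : (killedStep 2⁻¹ 2⁻¹ ^ n) F 0 =
      8 / (3 * π * n) * ((1 - 7 / (3 * n)) * survival n 0 - 1 / (3 * n)) := by
    simp [hF, survival, killedStep_pow_killedHarmonic, killedHarmonic]
  rw [← map_F]
  refine le_map_killedStep_pow _ _ _ (by norm_num) ?_ fun a b hba hab => ?_
  · intro z hz
    simp [hF, hz, killedHarmonic_of_neg hz]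
  · refine le_of_eq_of_le ?_ (le_quadrantSurvival_of_add_eq hn hab hba)
    rw [hF, Pi.smul_apply, Pi.sub_apply, Pi.smul_apply, Pi.smul_apply,
      Set.indicator_of_mem (by simpa using hba), killedHarmonic_of_nonneg (by lia)]
    simp only [Pi.one_apply, smul_eq_mul]
    push_cast
    ring

lemma numWalks_steps_le (hn : 0 < n) : numWalks 3 steps n ≤
    8 ^ n * (8 / (3 * π * n) * (1 + 1 / n) *
      ((1 + 1 / (3 * n)) * survival n 0 - 1 / (3 * n) + 5 * √n / (18 * n ^ 2))) := by
  rw [numWalks_steps]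
  gcongr
  set F : ℤ → ℝ := (8 / (3 * π * n) * (1 + 1 / n) : ℝ) •
    ((1 + 1 / (3 * n) : ℝ) • (Set.Ici 0).indicator 1 - (1 / (3 * n) : ℝ) • killedHarmonic +
      (1 / (18 * n ^ 2) : ℝ) • (√n • killedHarmonic + (1 / √n) • killedHarmonic ^ 3)) with hF
  have map_F : (killedStep 2⁻¹ 2⁻¹ ^ n) F 0 = 8 / (3 * π * n) * (1 + 1 / n) *
      ((1 + 1 / (3 * n)) * survival n 0 - 1 / (3 * n) +
        1 / (18 * n ^ 2) * (√n + 1 / √n * (1 + 3 * n))) := by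
    have hone : killedHarmonic 0 = 1 := by simp [killedHarmonic]
    simp only [hF, map_add, map_sub, map_smul, killedStep_pow_killedHarmonic,
      killedStep_pow_killedHarmonic_cube, Pi.add_apply, Pi.sub_apply, Pi.smul_apply, Pi.pow_apply,
      smul_eq_mul, hone, survival]
    ring
  have moment_le : 1 / (18 * n ^ 2) * (√n + 1 / √n * (1 + 3 * n)) ≤ 5 * √n / (18 * n ^ 2) := by
    have h1n : (1 : ℝ) ≤ n := by exact_mod_cast hn
    calc 1 / (18 * n ^ 2) * (√n + 1 / √n * (1 + 3 * n))
        ≤ 1 / (18 * n ^ 2) * (√n + 1 / √n * (n + 3 * n)) := by gcongr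
      _ = 1 / (18 * n ^ 2) * (√n + 4 * (n / √n)) := by ring
      _ = 5 * √n / (18 * n ^ 2) := by
        rw [Real.div_sqrt]
        ring
  refine le_trans (b := (killedStep 2⁻¹ 2⁻¹ ^ n) F 0) ?_ (by rw [map_F]; gcongr)
  refine map_killedStep_pow_le _ _ _ (by norm_num) ?_ fun a b hba hab => ?_
  · intro z hz
    simp [hF, hz, killedHarmonic_of_neg hz]
  · refine (quadrantSurvival_le_cubic hn hab hba).trans_eq ?_
    have hharm : killedHarmonic (a - b) = a - b + 1 := by
      rw [killedHarmonic_of_nonneg (by lia)]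
      push_cast
      rfl
    simp only [hF, Pi.smul_apply, Pi.add_apply, Pi.sub_apply, Pi.pow_apply, smul_eq_mul, hharm]
    rw [Set.indicator_of_mem (by simpa using hba), Pi.one_apply, mul_one]

end OctantEstimates

section Asymptotics

variable {n : ℕ}

lemma survival_le_sqrt (hn : 0 < n) : survival n 0 ≤ √(2 / (π * n)) := by
  refine Real.le_sqrt_of_sq_le ?_
  rw [le_div_iff₀ (by positivity)]
  exact survival_sq_le n

lemma sqrt_mul_le_survival (hn : 0 < n) : √(2 / (π * n)) * (1 - 2 / n) ≤ survival n 0 := by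
  have hq : 0 < √(2 / (π * n)) := by positivity
  have hv := survival_zero_pos n
  refine le_of_mul_le_mul_left ?_ hq
  calc √(2 / (π * n)) * (√(2 / (π * n)) * (1 - 2 / n))
      = 2 / (π * n) * (1 - 2 / n) := by
        rw [← mul_assoc, Real.mul_self_sqrt (by positivity)]
    _ ≤ 2 / (π * (n + 2)) := by
        rw [← sub_nonneg]
        have : 2 / (π * (n + 2)) - 2 / (π * n) * (1 - 2 / n) = 8 / (π * n ^ 2 * (n + 2)) := by
          field_simp
          ring
        rw [this]
        positivity
    _ ≤ survival n 0 * survival n 0 := by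
        rw [div_le_iff₀ (by positivity), ← sq]
        exact le_survival_sq n
    _ ≤ √(2 / (π * n)) * survival n 0 := by
        gcongr
        exact survival_le_sqrt hn

lemma sqrt_two_div_le_inv_sqrt (n : ℕ) : √(2 / (π * n)) ≤ (√n)⁻¹ := by
  rw [← Real.sqrt_inv]
  refine Real.sqrt_le_sqrt ?_
  rw [← div_div, ← one_div]
  gcongr
  rw [div_le_one Real.pi_pos]
  exact Real.two_le_pi

lemma abs_correction_le {y q v P : ℝ} (hy : 0 < y) (hy3 : 3 * y ^ 2 ≤ 1) (hq : 0 ≤ q) (hqy : q ≤ y)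
    (hqv : q * (1 - 2 * y ^ 2) ≤ v) (hvq : v ≤ q)
    (hlower : (1 - 7 / 3 * y ^ 2) * v - y ^ 2 / 3 ≤ P)
    (hupper : P ≤ (1 + y ^ 2) * ((1 + y ^ 2 / 3) * v - y ^ 2 / 3 + 5 / 18 * y ^ 3)) :
    |P - (q - y ^ 2 / 3)| ≤ 5 * y ^ 3 := by
  have hqy3 : q * y ^ 2 ≤ y ^ 3 := by
    calc q * y ^ 2 ≤ y * y ^ 2 := by gcongr
      _ = y ^ 3 := by ring
  rw [abs_le]
  constructor
  · have : (1 - 7 / 3 * y ^ 2) * (q * (1 - 2 * y ^ 2)) ≤ (1 - 7 / 3 * y ^ 2) * v := by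
      gcongr
      linarith
    have : 0 ≤ q * y ^ 4 := by positivity
    nlinarith
  · have : (1 + y ^ 2) * (1 + y ^ 2 / 3) * v ≤ (1 + y ^ 2) * (1 + y ^ 2 / 3) * q := by gcongr
    have : y ^ 2 * (q * y ^ 2) ≤ 1 * y ^ 3 := by
      gcongr
      linarith
    have : y ^ 2 * y ^ 3 ≤ 1 * y ^ 3 := by
      gcongr
      linarith
    have : 0 ≤ y ^ 4 := by positivity
    have : 0 ≤ y ^ 3 := by positivity
    nlinarith

lemma abs_numWalks_steps_div_sub_le (hn : 3 ≤ n) :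
    |numWalks 3 steps n / (8 ^ n * (8 / (3 * π * n))) - (√(2 / (π * n)) - 1 / (3 * n))| ≤
      5 / √n ^ 3 := by
  have hn0 : 0 < n := by lia
  have hn3 : (3 : ℝ) ≤ n := by exact_mod_cast hn
  set y := (√(n : ℝ))⁻¹ with hy
  have hy2 : y ^ 2 = (n : ℝ)⁻¹ := by rw [hy, inv_pow, Real.sq_sqrt (Nat.cast_nonneg n)]
  have hsqrt : √(n : ℝ) = n * y := by rw [hy, ← div_eq_mul_inv, Real.div_sqrt]
  rw [show 1 / (3 * n) = y ^ 2 / 3 by rw [hy2]; ring, show 5 / √n ^ 3 = 5 * y ^ 3 by rw [hy]; ring]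
  refine abs_correction_le (by positivity) ?_ (by positivity) (sqrt_two_div_le_inv_sqrt n) ?_
    (survival_le_sqrt hn0) ?_ ?_
  · rw [hy2, ← div_eq_mul_inv]
    exact div_le_one_of_le₀ hn3 (Nat.cast_nonneg n)
  · rw [hy2, ← div_eq_mul_inv]
    exact sqrt_mul_le_survival hn0
  · rw [le_div_iff₀' (by positivity)]
    refine Eq.trans_le ?_ (le_numWalks_steps hn0)
    rw [hy2]
    ring
  · rw [div_le_iff₀' (by positivity)]
    refine (numWalks_steps_le hn0).trans_eq ?_
    rw [hsqrt, pow_succ y 2, hy2]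
    field_simp

lemma abs_numWalks_steps_sub_le (hn : 3 ≤ n) :
    |(numWalks 3 steps n : ℝ) - 8 ^ n * (8 / (3 * π * n) * (√(2 / (π * n)) - 1 / (3 * n)))| ≤
      5 * 8 ^ n / √n ^ 5 := by
  have hn0 : 0 < n := by lia
  set E := √(2 / (π * n)) - 1 / (3 * n)
  have hpos : (0 : ℝ) < 8 ^ n * (8 / (3 * π * n)) := by positivity
  have hscale : 8 ^ n * (8 / (3 * π * n)) ≤ (8 ^ n / √n ^ 2 : ℝ) := by
    rw [Real.sq_sqrt (Nat.cast_nonneg n), div_eq_mul_inv ((8 : ℝ) ^ n), ← one_div]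
    gcongr 8 ^ n * ?_
    rw [div_le_div_iff₀ (by positivity) (by positivity)]
    nlinarith [Real.pi_gt_three, (Nat.cast_pos (α := ℝ)).mpr hn0]
  calc |(numWalks 3 steps n : ℝ) - 8 ^ n * (8 / (3 * π * n) * E)|
      = |8 ^ n * (8 / (3 * π * n)) * (numWalks 3 steps n / (8 ^ n * (8 / (3 * π * n))) - E)| := by
        rw [mul_sub (_ * _), mul_div_cancel₀ _ hpos.ne',
          mul_assoc ((8 : ℝ) ^ n)]
    _ = 8 ^ n * (8 / (3 * π * n)) * |numWalks 3 steps n / (8 ^ n * (8 / (3 * π * n))) - E| := by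
        rw [abs_mul, abs_of_pos hpos]
    _ ≤ 8 ^ n / √n ^ 2 * (5 / √n ^ 3) :=
        mul_le_mul hscale (abs_numWalks_steps_div_sub_le hn) (abs_nonneg _) (by positivity)
    _ = 5 * 8 ^ n / √n ^ 5 := by
        ring

lemma rpow_natCast_div_two {x : ℝ} (hx : 0 ≤ x) (k : ℕ) : x ^ ((k : ℝ) / 2) = √x ^ k := by
  rw [Real.rpow_div_two_eq_sqrt _ hx, Real.rpow_natCast]

lemma leading_terms_eq (hn : 0 < n) :
    8 ^ n / (n : ℝ) ^ ((3 : ℝ) / 2) * (8 * √2 / (3 * π ^ ((3 : ℝ) / 2)) - 8 / (9 * π * √n)) =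
      8 ^ n * (8 / (3 * π * n) * (√(2 / (π * n)) - 1 / (3 * n))) := by
  have rpow_three_halves (x : ℝ) (hx : 0 ≤ x) : x ^ ((3 : ℝ) / 2) = x * √x := by
    rw [← Nat.cast_ofNat, rpow_natCast_div_two hx, pow_succ, Real.sq_sqrt hx]
  have : 0 < √(n : ℝ) := Real.sqrt_pos.mpr (by exact_mod_cast hn)
  rw [rpow_three_halves n n.cast_nonneg, rpow_three_halves π Real.pi_nonneg,
    Real.sqrt_div zero_le_two, Real.sqrt_mul Real.pi_nonneg]
  field_simp
  linear_combination 9 * √π * Real.mul_self_sqrt (Nat.cast_nonneg (α := ℝ) n)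

end Asymptotics

/-- For the 3D step set `{(±1,0,-1), (0,±1,-1), (±1,±1,1)}`, the number of octant walks
satisfies `s_n = (8^n/n^{3/2})(8√2/(3π^{3/2}) − 8/(9π√n) + O(1/n))`. -/
theorem threeD_example_with_correction :
    ∃ C : ℝ, ∀ᶠ n : ℕ in atTop,
      |(numWalks 3 ({![1, 0, -1], ![-1, 0, -1], ![0, 1, -1], ![0, -1, -1],
            ![1, 1, 1], ![-1, 1, 1], ![1, -1, 1], ![-1, -1, 1]} : Finset (Fin 3 → ℤ)) n : ℝ) -
          8 ^ n / (n : ℝ) ^ ((3 : ℝ) / 2) *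
            (8 * Real.sqrt 2 / (3 * π ^ ((3 : ℝ) / 2)) - 8 / (9 * π * Real.sqrt n))|
        ≤ C * 8 ^ n / (n : ℝ) ^ ((5 : ℝ) / 2) := by
  refine ⟨5, ?_⟩
  filter_upwards [eventually_ge_atTop 3] with n hn
  rw [leading_terms_eq (by lia), ← Nat.cast_ofNat (n := 5),
    rpow_natCast_div_two (Nat.cast_nonneg n) 5]
  exact abs_numWalks_steps_sub_le hn

end
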